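/- Let H be a partial mixed graph and M a completion of H in which the edge between A and B is A → B. Let S_A = {A} ∪ {V : V is adjacent to A in H and the edge V–A has an arrowhead at A}. Suppose K is a vertex such that there is an uncovered possible directed path ⟨A, B, …, K⟩ in H whose second vertex is B, and suppose T ∈ S_A is adjacent to K in H. Then in M the edge between T and K has an arrowhead at K (in particular, K → T does not hold in M). -/

import Mathlib

/-- Marks at edge ends in a partial mixed graph. -/
inductive Mark : Type
  | tail
  | arrow
  | circle
deriving DecidableEq

/-- A partial mixed graph (PMG): a symmetric irreflexive adjacency relation together
with, for each ordered pair `(a, b)` of adjacent vertices, a mark `mark a b` at `b` on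
the edge `a–b`, such that no edge has tails at both endpoints. -/
structure PMG (V : Type) where
  adj : V → V → Prop
  symm : ∀ a b, adj a b → adj b a
  irrefl : ∀ a, ¬ adj a a
  mark : V → V → Mark
  noDoubleTail : ∀ a b, adj a b → ¬ (mark a b = Mark.tail ∧ mark b a = Mark.tail)

namespace PMG

variable {V : Type}

/-- `a → b`: adjacent, tail at `a`, arrowhead at `b`. -/
def dir (G : PMG V) (a b : V) : Prop :=
  G.adj a b ∧ G.mark b a = Mark.tail ∧ G.mark a b = Mark.arrow

/-- `a ↔ b`: adjacent, arrowheads at both endpoints. -/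
def bidir (G : PMG V) (a b : V) : Prop :=
  G.adj a b ∧ G.mark b a = Mark.arrow ∧ G.mark a b = Mark.arrow

/-- `a` is an ancestor of `b`: `a = b` or there is a directed path from `a` to `b`. -/
def Anc (G : PMG V) (a b : V) : Prop :=
  Relation.ReflTransGen G.dir a b

/-- `a` is an ancestor of some vertex of the set `S`. -/
def AncSet (G : PMG V) (a : V) (S : Set V) : Prop :=
  ∃ v ∈ S, G.Anc a v

/-- A mixed graph: a PMG with no circle marks. -/
def IsMixed (G : PMG V) : Prop :=
  ∀ a b, G.adj a b → G.mark a b ≠ Mark.circle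

/-- Ancestral: no directed cycles and no almost directed cycles. -/
def Ancestral (G : PMG V) : Prop :=
  ∀ a b, G.Anc a b → a ≠ b → ¬ G.dir b a ∧ ¬ G.bidir a b

/-- Unshielded collider `(a, b, c)`: `a, c` both adjacent to `b`, `a` and `c`
distinct and nonadjacent, arrowheads at `b` on both edges. -/
def UnshieldedCollider (G : PMG V) (a b c : V) : Prop :=
  a ≠ c ∧ G.adj a b ∧ G.adj c b ∧ ¬ G.adj a c ∧
    G.mark a b = Mark.arrow ∧ G.mark c b = Mark.arrow

/-- `M` is a completion of the PMG `H`: same vertices and adjacencies, all non-circle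
marks of `H` occur identically in `M`, `M` is an ancestral mixed graph, and every
unshielded collider of `M` is already an unshielded collider of `H`. -/
def Completion (H M : PMG V) : Prop :=
  (∀ a b, M.adj a b ↔ H.adj a b) ∧
  (∀ a b, H.adj a b → H.mark a b ≠ Mark.circle → M.mark a b = H.mark a b) ∧
  M.IsMixed ∧ M.Ancestral ∧
  (∀ a b c, M.UnshieldedCollider a b c → H.UnshieldedCollider a b c)

/-- An edge usable in a possible directed path from `a` to `b`:
adjacent, no arrowhead at `a`, no tail at `b`. -/
def possEdge (G : PMG V) (a b : V) : Prop :=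
  G.adj a b ∧ G.mark b a ≠ Mark.arrow ∧ G.mark a b ≠ Mark.tail

/-- A circle edge: adjacent with circle marks at both endpoints. -/
def circleEdge (G : PMG V) (a b : V) : Prop :=
  G.adj a b ∧ G.mark a b = Mark.circle ∧ G.mark b a = Mark.circle

/-- `p 0, …, p n` is a path: distinct vertices, consecutive ones adjacent. -/
def IsPathOn (G : PMG V) (p : ℕ → V) (n : ℕ) : Prop :=
  (∀ i ≤ n, ∀ j ≤ n, p i = p j → i = j) ∧ ∀ i < n, G.adj (p i) (p (i+1))

/-- `p 0, …, p n` is a possible directed path. -/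
def IsPossDirPathOn (G : PMG V) (p : ℕ → V) (n : ℕ) : Prop :=
  (∀ i ≤ n, ∀ j ≤ n, p i = p j → i = j) ∧ ∀ i < n, G.possEdge (p i) (p (i+1))

/-- `p 0, …, p n` is a circle path. -/
def IsCirclePathOn (G : PMG V) (p : ℕ → V) (n : ℕ) : Prop :=
  (∀ i ≤ n, ∀ j ≤ n, p i = p j → i = j) ∧ ∀ i < n, G.circleEdge (p i) (p (i+1))

/-- The path `p 0, …, p n` is uncovered: any two nonconsecutive neighbours of an
internal vertex are nonadjacent. -/
def UncoveredOn (G : PMG V) (p : ℕ → V) (n : ℕ) : Prop :=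
  ∀ i, i + 2 ≤ n → ¬ G.adj (p i) (p (i+2))

/-- `F_x` relative to `V'`: the vertices of `V'` adjacent to `x` whose edge carries
a circle or an arrowhead at `x`. -/
def Fset (G : PMG V) (V' : Set V) (x : V) : Set V :=
  {v | v ∈ V' ∧ G.adj v x ∧ (G.mark v x = Mark.circle ∨ G.mark v x = Mark.arrow)}

/-- `p 0, …, p n` is an unbridged path relative to `V'` in `G`: an uncovered circle
path with at least one edge, lying in `G[−V']`, with
`F_{p 0} \ F_{p 1} ≠ ∅` and `F_{p n} \ F_{p (n-1)} ≠ ∅`. -/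
def UnbridgedOn (G : PMG V) (V' : Set V) (p : ℕ → V) (n : ℕ) : Prop :=
  1 ≤ n ∧ G.IsCirclePathOn p n ∧ G.UncoveredOn p n ∧
  (∀ i ≤ n, p i ∉ V') ∧
  (G.Fset V' (p 0) \ G.Fset V' (p 1)).Nonempty ∧
  (G.Fset V' (p n) \ G.Fset V' (p (n-1))).Nonempty

/-- The set `S_A`: `A` together with all vertices adjacent to `A` whose edge has an
arrowhead at `A`. -/
def SA (G : PMG V) (A : V) : Set V :=
  {A} ∪ {v | G.adj v A ∧ G.mark v A = Mark.arrow}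

end PMG

/-!
Once `M` has an arrowhead at an internal vertex of the path, on the edge from its predecessor, the
next edge must be directed out of that vertex: the triple is unshielded, and a collider there would
have to be present in `H`, which has no arrowhead at that vertex on the next edge. Hence the
orientation `A → B` propagates along the path and `A` is an ancestor of `K` in `M`. If `K → T` held
in `M`, then `A` would also be an ancestor of `T`, which ancestrality forbids both when `T = A` and
when the edge between `T` and `A` has an arrowhead at `A`.
-/

namespace PMG

variable {V : Type} {G H M : PMG V} {a b c t : V}

theorem IsMixed.mark_eq_arrow_iff_ne_tail (hG : G.IsMixed) (hab : G.adj a b) :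
    G.mark a b = Mark.arrow ↔ G.mark a b ≠ Mark.tail := by
  have hcircle := hG a b hab
  cases hmark : G.mark a b <;> simp_all

theorem IsMixed.mark_eq_tail_iff_dir (hG : G.IsMixed) (hab : G.adj a b) :
    G.mark b a = Mark.tail ↔ G.dir a b where
  mp htail :=
    ⟨hab, htail, (hG.mark_eq_arrow_iff_ne_tail hab).2 fun htail' =>
      G.noDoubleTail a b hab ⟨htail', htail⟩⟩
  mpr hdir := hdir.2.1

theorem IsMixed.mark_eq_arrow_iff_not_dir (hG : G.IsMixed) (hab : G.adj a b) :
    G.mark a b = Mark.arrow ↔ ¬ G.dir b a :=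
  (hG.mark_eq_arrow_iff_ne_tail hab).trans
    (not_congr (hG.mark_eq_tail_iff_dir (G.symm a b hab)))

theorem Ancestral.mark_eq_arrow_of_anc (hanc : G.Ancestral) (hG : G.IsMixed)
    (hab : G.Anc a b) (hadj : G.adj a b) : G.mark a b = Mark.arrow := by
  have hne : a ≠ b := by
    rintro rfl
    exact G.irrefl a hadj
  exact (hG.mark_eq_arrow_iff_not_dir hadj).2 (hanc a b hab hne).1

theorem Ancestral.not_anc_of_mark_eq_arrow (hanc : G.Ancestral) (hG : G.IsMixed)
    (hadj : G.adj a b) (harrow : G.mark a b = Mark.arrow) : ¬ G.Anc b a := by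
  intro hba
  have hadj' : G.adj b a := G.symm a b hadj
  have hne : b ≠ a := by
    rintro rfl
    exact G.irrefl b hadj
  exact (hanc b a hba hne).2 ⟨hadj', harrow, hanc.mark_eq_arrow_of_anc hG hba hadj'⟩

theorem Ancestral.mark_eq_arrow_of_mem_SA (hanc : G.Ancestral) (hG : G.IsMixed)
    (hab : G.Anc a b) (ht : t ∈ G.SA a) (htb : G.adj t b) : G.mark t b = Mark.arrow := by
  rcases ht with rfl | ⟨hta, harrow⟩
  · exact hanc.mark_eq_arrow_of_anc hG hab htb
  · refine (hG.mark_eq_arrow_iff_not_dir htb).2 fun hbt => ?_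
    have hat : G.Anc a t := Relation.ReflTransGen.tail hab hbt
    exact hanc.not_anc_of_mark_eq_arrow hG hta harrow hat

namespace Completion

theorem adj_iff (h : Completion H M) : M.adj a b ↔ H.adj a b :=
  h.1 a b

theorem mark_eq (h : Completion H M) (hab : H.adj a b) (hmark : H.mark a b ≠ Mark.circle) :
    M.mark a b = H.mark a b :=
  h.2.1 a b hab hmark

theorem isMixed (h : Completion H M) : M.IsMixed :=
  h.2.2.1

theorem ancestral (h : Completion H M) : M.Ancestral :=
  h.2.2.2.1

theorem unshieldedCollider (h : Completion H M) (habc : M.UnshieldedCollider a b c) :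
    H.UnshieldedCollider a b c :=
  h.2.2.2.2 a b c habc

theorem SA_subset (h : Completion H M) (a : V) : H.SA a ⊆ M.SA a := by
  rintro t (rfl | ⟨hta, harrow⟩)
  · exact Or.inl rfl
  · exact Or.inr ⟨h.adj_iff.2 hta, (h.mark_eq hta (by simp [harrow])).trans harrow⟩

theorem dir_of_mark_eq_arrow_of_not_adj (h : Completion H M) (hab : H.adj a b)
    (harrow : M.mark a b = Mark.arrow) (hbc : H.adj b c) (hmark : H.mark c b ≠ Mark.arrow)
    (hne : a ≠ c) (hac : ¬ H.adj a c) : M.dir b c := by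
  by_contra hdir
  have hcb : M.adj c b := h.adj_iff.2 (H.symm b c hbc)
  have harrow' : M.mark c b = Mark.arrow := (h.isMixed.mark_eq_arrow_iff_not_dir hcb).2 hdir
  have hcollider : M.UnshieldedCollider a b c :=
    ⟨hne, h.adj_iff.2 hab, hcb, mt h.adj_iff.1 hac, harrow, harrow'⟩
  obtain ⟨-, -, -, -, -, hmark'⟩ := h.unshieldedCollider hcollider
  exact hmark hmark'

variable {p : ℕ → V} {n : ℕ}

theorem dir_succ_of_uncoveredOn (h : Completion H M) (hpath : H.IsPossDirPathOn p n)
    (hunc : H.UncoveredOn p n) (hdir : M.dir (p 0) (p 1)) {i : ℕ} (hi : i < n) :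
    M.dir (p i) (p (i + 1)) := by
  obtain ⟨hinj, hedge⟩ := hpath
  induction i with
  | zero => exact hdir
  | succ i ih =>
    have hprev : M.dir (p i) (p (i + 1)) := ih (by lia)
    have hne : p i ≠ p (i + 2) := fun heq => by
      have := hinj i (by lia) (i + 2) (by lia) heq
      lia
    obtain ⟨hadj, hmark, -⟩ := hedge (i + 1) hi
    exact h.dir_of_mark_eq_arrow_of_not_adj (h.adj_iff.1 hprev.1) hprev.2.2 hadj hmark hne
      (hunc i (by lia))

theorem anc_of_uncoveredOn (h : Completion H M) (hpath : H.IsPossDirPathOn p n)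
    (hunc : H.UncoveredOn p n) (hdir : M.dir (p 0) (p 1)) : M.Anc (p 0) (p n) :=
  (reflTransGen_of_succ_of_le (fun i j => M.dir (p i) (p j))
    (fun _ hi => h.dir_succ_of_uncoveredOn hpath hunc hdir hi.2) n.zero_le).lift p fun _ _ => id

end Completion

end PMG

theorem arrowhead_at_end_of_ppd_path_general {V : Type} {H M : PMG V}
    (hHM : PMG.Completion H M) {p : ℕ → V} {n : ℕ} {T : V} (hdir : M.dir (p 0) (p 1))
    (hT : T ∈ M.SA (p 0)) (hTK : H.adj T (p n))
    (hpath : H.IsPossDirPathOn p n) (hunc : H.UncoveredOn p n) :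
    M.mark T (p n) = Mark.arrow ∧ ¬ M.dir (p n) T := by
  have hadj : M.adj T (p n) := hHM.adj_iff.2 hTK
  have hAK : M.Anc (p 0) (p n) := hHM.anc_of_uncoveredOn hpath hunc hdir
  have harrow : M.mark T (p n) = Mark.arrow :=
    hHM.ancestral.mark_eq_arrow_of_mem_SA hHM.isMixed hAK hT hadj
  exact ⟨harrow, (hHM.isMixed.mark_eq_arrow_iff_not_dir hadj).1 harrow⟩

/-- Let `M` be a completion of the PMG `H` in which `A → B`. If there is an
uncovered possible directed path `⟨A, B, …, K⟩` in `H` whose second vertex is `B`,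
and `T ∈ S_A` is adjacent to `K` in `H`, then in `M` the edge between `T` and `K`
has an arrowhead at `K` (in particular `K → T` does not hold in `M`). -/
theorem arrowhead_at_end_of_ppd_path {V : Type} (H M : PMG V)
    (hHM : PMG.Completion H M)
    (A B K T : V) (hdirAB : M.dir A B)
    (hT : T ∈ H.SA A) (hTK : H.adj T K)
    (p : ℕ → V) (n : ℕ) (hn : 1 ≤ n)
    (hpath : H.IsPossDirPathOn p n) (hunc : H.UncoveredOn p n)
    (hA : p 0 = A) (hB : p 1 = B) (hK : p n = K) :
    M.mark T K = Mark.arrow ∧ ¬ M.dir K T := by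
  subst hA hB hK
  exact arrowhead_at_end_of_ppd_path_general hHM hdirAB (hHM.SA_subset _ hT) hTK hpath hunc
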